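/- Let A and B be bounded linear operators on a complex separable Hilbert space H such that A is normal. If both AB and BA are normal, then AA*B = BA*A (equivalently, B commutes with A*A). -/

import Mathlib

open ContinuousLinearMap

/-- A bounded operator `T` on a Hilbert space is *normal* if `T T* = T* T`. -/
def IsNormalOp {H : Type*} [NormedAddCommGroup H] [InnerProductSpace ℂ H] [CompleteSpace H]
    (T : H →L[ℂ] H) : Prop :=
  T * adjoint T = adjoint T * T

lemma IsNormalOp.isStarNormal {H : Type*} [NormedAddCommGroup H] [InnerProductSpace ℂ H]
    [CompleteSpace H] {T : H →L[ℂ] H} (hT : IsNormalOp T) : IsStarNormal T :=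
  ⟨hT.symm⟩

section NonUnitalCStarAlgebra

variable {A : Type*} [NonUnitalCStarAlgebra A] {a b : A}

lemma semiconjBy_mul_star_self_star_mul_self (hab : IsStarNormal (a * b))
    (hba : IsStarNormal (b * a)) : SemiconjBy b (a * star a) (star a * a) := by
  have intertwines : SemiconjBy a (b * a) (a * b) := (mul_assoc a b a).symm
  have intertwines_star : SemiconjBy a (star (b * a)) (star (a * b)) :=
    fuglede_putnam_rosenblum hba hab intertwines
  have star_intertwines : SemiconjBy (star a) (a * b) (b * a) :=
    semiconjBy_star_star_star.1 (by simpa only [star_star] using intertwines_star)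
  calc
    b * (a * star a) = b * a * star a := (mul_assoc b a (star a)).symm
    _ = star a * (a * b) := star_intertwines.eq.symm
    _ = star a * a * b := (mul_assoc (star a) a b).symm

theorem commute_of_normal_general (ha : IsStarNormal a) (hab : IsStarNormal (a * b))
    (hba : IsStarNormal (b * a)) : Commute (star a * a) b := by
  have semiconj := semiconjBy_mul_star_self_star_mul_self hab hba
  rw [← ha.star_comm_self.eq] at semiconj
  exact Commute.symm semiconj

end NonUnitalCStarAlgebra

/-- If `A` is normal and both `AB` and `BA` are normal, then `A A* B = B A* A`,
i.e. `B` commutes with `A* A`. -/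
theorem commute_of_normal {H : Type*} [NormedAddCommGroup H] [InnerProductSpace ℂ H]
    [CompleteSpace H] [TopologicalSpace.SeparableSpace H]
    (A B : H →L[ℂ] H) (hA : IsNormalOp A) (hAB : IsNormalOp (A * B))
    (hBA : IsNormalOp (B * A)) :
    A * adjoint A * B = B * (adjoint A * A) := by
  rw [hA]
  exact commute_of_normal_general hA.isStarNormal hAB.isStarNormal hBA.isStarNormal
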